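/- arXiv:1507.04073 — 2 statements merged into one kernel-verified Lean document; each statement's English description precedes it below -/
import Mathlib

section
/- Let A = [a_1, ..., a_n] ∈ ℝ^{m×n} be nonzero and let (B, N) be the canonical partition of {1,...,n} (B ∪ N = {1,...,n}, B ∩ N = ∅, A_B x_B = 0 with x_B > 0 is feasible, and A_N^T y > 0, A_B^T y = 0 is feasible). Suppose N ≠ ∅ and L := span(A_B) ≠ {0}. Then φ(A) ≥ |ρ_B(A)| ρ_N(A) / √(‖A‖² + ρ_N(A)²), where ‖A‖ := max_{i=1,...,n} ‖a_i‖₂, ρ_B(A) := max_{z ∈ L, ‖z‖₂=1} min_{i ∈ B} ⟨a_i, z⟩, and ρ_N(A) := max_{z ∈ L^⊥, ‖z‖₂=1} min_{i ∈ N} ⟨a_i, z⟩. -/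
open scoped RealInnerProductSpace BigOperators

/-- `comb a x = A x`, the combination `∑ i, x i • a i` of the columns `a i` of `A`. -/
noncomputable def comb {m n : ℕ} (a : Fin n → EuclideanSpace ℝ (Fin m)) (x : Fin n → ℝ) :
    EuclideanSpace ℝ (Fin m) := ∑ i, x i • a i

/-- `φ(A, x) = sup {λ > 0 : ∃ u v ∈ Δ_{n-1}, S(u) ⊆ S(x), Au - Av = (λ/‖Ax‖) Ax}`. -/
noncomputable def phiAt {m n : ℕ} (a : Fin n → EuclideanSpace ℝ (Fin m))
    (x : Fin n → ℝ) : ℝ :=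
  sSup {lam : ℝ | 0 < lam ∧ ∃ u ∈ stdSimplex ℝ (Fin n), ∃ v ∈ stdSimplex ℝ (Fin n),
    (∀ i, 0 < u i → 0 < x i) ∧
    comb a u - comb a v = (lam / ‖comb a x‖) • comb a x}

/-- The restricted width `φ(A) = min {φ(A, x) : x ≥ 0, Ax ≠ 0}`. -/
noncomputable def phi {m n : ℕ} (a : Fin n → EuclideanSpace ℝ (Fin m)) : ℝ :=
  sInf {t : ℝ | ∃ x : Fin n → ℝ, (∀ i, 0 ≤ x i) ∧ comb a x ≠ 0 ∧ t = phiAt a x}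

/-!
Write `w = A x = p + q` with `p = A_B x_B ∈ L`, and put `σ = ∑ i ∈ N, x i`. Two facts drive the
bound. By separation, `conv {a i | i ∈ B}` contains the ball of `L` of radius `|ρ_B|`. And if
`y ∈ Lᗮ` is the unit vector attaining `ρ_N`, then `q = A_N x_N` makes with `y` an angle of cosine at
least `ρ_N / ‖A‖` while `p ⊥ y`, so `ρ_N ‖p‖ ≤ ‖A‖ ‖w‖`; moreover
`ρ_N σ ≤ ⟪q, y⟫ = ⟪w, y⟫ ≤ ‖w‖`.

For `s = |ρ_B| ρ_N / (‖A‖ ‖w‖)` this gives `s σ ≤ 1` and `-s p = A v` with `v` in the simplex. Then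
`s x_N`, completed to total mass one by a multiple of `x`, is a point `u` of the simplex supported
on `S(x)`, and `A u - A v` is a multiple of `w` of length at least `s ‖w‖ = |ρ_B| ρ_N / ‖A‖`, which
is better than the required bound.
-/

section NormedSpace

variable {ι E : Type*} [NormedAddCommGroup E]

theorem norm_le_iSup_norm [Finite ι] (a : ι → E) (i : ι) : ‖a i‖ ≤ ⨆ j, ‖a j‖ :=
  le_ciSup (f := fun j => ‖a j‖) (Set.finite_range _).bddAbove i

theorem iSup_norm_pos [Finite ι] {a : ι → E} (ha : ∃ i, a i ≠ 0) : 0 < ⨆ i, ‖a i‖ :=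
  let ⟨i, hi⟩ := ha
  (norm_pos_iff.mpr hi).trans_le (norm_le_iSup_norm a i)

theorem norm_sum_smul_le_mul_sum [NormedSpace ℝ E] {a : ι → E} {s : Finset ι} {x : ι → ℝ}
    {C : ℝ} (hx : ∀ i ∈ s, 0 ≤ x i) (ha : ∀ i ∈ s, ‖a i‖ ≤ C) :
    ‖∑ i ∈ s, x i • a i‖ ≤ C * ∑ i ∈ s, x i := by
  rw [Finset.mul_sum]
  refine norm_sum_le_of_le s fun i hi => ?_
  rw [norm_smul, Real.norm_of_nonneg (hx i hi), mul_comm C]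
  exact mul_le_mul_of_nonneg_left (ha i hi) (hx i hi)

end NormedSpace

section InnerProductSpace

variable {ι E : Type*} [NormedAddCommGroup E] [InnerProductSpace ℝ E]

theorem mul_sum_le_inner_sum_smul {a : ι → E} {s : Finset ι} {x : ι → ℝ} {y : E} {r : ℝ}
    (hx : ∀ i ∈ s, 0 ≤ x i) (hy : ∀ i ∈ s, r ≤ ⟪a i, y⟫) :
    r * ∑ i ∈ s, x i ≤ ⟪∑ i ∈ s, x i • a i, y⟫ := by
  rw [Finset.mul_sum, sum_inner]
  refine Finset.sum_le_sum fun i hi => ?_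
  rw [real_inner_smul_left, mul_comm r]
  exact mul_le_mul_of_nonneg_left (hy i hi) (hx i hi)

theorem inner_sum_smul_eq_zero {a : ι → E} {s : Finset ι} {x : ι → ℝ} {y : E}
    (hy : ∀ i ∈ s, ⟪a i, y⟫ = 0) : ⟪∑ i ∈ s, x i • a i, y⟫ = 0 := by
  rw [sum_inner]
  exact Finset.sum_eq_zero fun i hi => by rw [real_inner_smul_left, hy i hi, mul_zero]

theorem norm_add_smul_sq_of_inner_eq_zero {u y : E} (hy : ‖y‖ = 1) (huy : ⟪u, y⟫ = 0) (t : ℝ) :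
    ‖u + t • y‖ ^ 2 = ‖u‖ ^ 2 + t ^ 2 := by
  rw [norm_add_sq_real, real_inner_smul_right, huy, norm_smul, hy, mul_one, Real.norm_eq_abs,
    sq_abs]
  ring

theorem mul_add_sq_le_of_sq_mul_add_sq_le {r C α β t : ℝ} (hr : 0 ≤ r) (hrC : r ≤ C)
    (hα : 0 ≤ α) (ht : 0 ≤ t) (h : r ^ 2 * (β ^ 2 + t ^ 2) ≤ C ^ 2 * t ^ 2) :
    r ^ 2 * (α + β) ^ 2 ≤ C ^ 2 * (α ^ 2 + t ^ 2) := by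
  obtain ⟨d, hd, hdC⟩ : ∃ d : ℝ, 0 ≤ d ∧ d ^ 2 = C ^ 2 - r ^ 2 :=
    ⟨√(C ^ 2 - r ^ 2), Real.sqrt_nonneg _, Real.sq_sqrt (by nlinarith)⟩
  have hβ : r * β ≤ d * t := abs_le_of_sq_le_sq' (by nlinarith) (by positivity) |>.2
  have hcross : (r * α) * (r * β) ≤ (r * α) * (d * t) := by gcongr
  nlinarith [sq_nonneg (d * α - r * t)]

-- The hypothesis `hq` says that `q` makes with `y` an angle of cosine at least `r / C`.
theorem mul_norm_le_mul_norm_add {p q y : E} {r C : ℝ} (hr : 0 ≤ r) (hrC : r ≤ C) (hy : ‖y‖ = 1)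
    (hpy : ⟪p, y⟫ = 0) (hqy : 0 ≤ ⟪q, y⟫) (hq : r * ‖q‖ ≤ C * ⟪q, y⟫) :
    r * ‖p‖ ≤ C * ‖p + q‖ := by
  have hC : 0 ≤ C := hr.trans hrC
  set t := ⟪q, y⟫ with ht
  set q' := q - t • y with hq'
  have hq'y : ⟪q', y⟫ = 0 := by
    rw [hq', inner_sub_left, real_inner_smul_left, real_inner_self_eq_norm_sq, hy, ← ht]
    ring
  have hqsq : ‖q‖ ^ 2 = ‖q'‖ ^ 2 + t ^ 2 := by
    rw [← norm_add_smul_sq_of_inner_eq_zero hy hq'y, hq', sub_add_cancel]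
  have hpqsq : ‖p + q‖ ^ 2 = ‖p + q'‖ ^ 2 + t ^ 2 := by
    rw [← norm_add_smul_sq_of_inner_eq_zero hy (by rw [inner_add_left, hpy, hq'y, add_zero]), hq',
      add_assoc, sub_add_cancel]
  have hcone : r ^ 2 * (‖q'‖ ^ 2 + t ^ 2) ≤ C ^ 2 * t ^ 2 := by
    rw [← hqsq, ← mul_pow, ← mul_pow]
    exact pow_le_pow_left₀ (by positivity) hq 2
  have hp : ‖p‖ ≤ ‖p + q'‖ + ‖q'‖ := by
    simpa only [add_sub_cancel_right] using norm_sub_le (p + q') q'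
  refine le_of_sq_le_sq ?_ (by positivity)
  calc (r * ‖p‖) ^ 2 = r ^ 2 * ‖p‖ ^ 2 := mul_pow ..
    _ ≤ r ^ 2 * (‖p + q'‖ + ‖q'‖) ^ 2 := by gcongr
    _ ≤ C ^ 2 * (‖p + q'‖ ^ 2 + t ^ 2) :=
      mul_add_sq_le_of_sq_mul_add_sq_le hr hrC (norm_nonneg _) hqy hcone
    _ = (C * ‖p + q‖) ^ 2 := by rw [← hpqsq, mul_pow]

theorem mem_orthogonal_span_image {a : ι → E} {s : Set ι} {y : E} (h : ∀ i ∈ s, ⟪a i, y⟫ = 0) :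
    y ∈ (Submodule.span ℝ (a '' s))ᗮ := by
  have hspan : Submodule.span ℝ (a '' s) ≤ (ℝ ∙ y)ᗮ := by
    rw [Submodule.span_le]
    rintro _ ⟨i, hi, rfl⟩
    exact Submodule.mem_orthogonal_singleton_iff_inner_left.mpr (h i hi)
  exact fun v hv => Submodule.mem_orthogonal_singleton_iff_inner_left.mp (hspan hv)

section WeightedSums

variable [Fintype ι] {a : ι → E} {B : Finset ι} {x : ι → ℝ} {y : E} {r : ℝ}

theorem mul_sum_compl_le_norm_sum_smul [DecidableEq ι] (hx : ∀ i, 0 ≤ x i) (hy : ‖y‖ = 1)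
    (hyB : ∀ i ∈ B, ⟪a i, y⟫ = 0) (hyN : ∀ i ∉ B, r ≤ ⟪a i, y⟫) :
    r * ∑ i ∈ Bᶜ, x i ≤ ‖∑ i, x i • a i‖ := by
  calc r * ∑ i ∈ Bᶜ, x i ≤ ⟪∑ i ∈ Bᶜ, x i • a i, y⟫ :=
        mul_sum_le_inner_sum_smul (fun i _ => hx i) fun i hi => hyN i (Finset.mem_compl.mp hi)
    _ = ⟪∑ i, x i • a i, y⟫ := by
        rw [← Finset.sum_add_sum_compl B, inner_add_left, inner_sum_smul_eq_zero hyB, zero_add]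
    _ ≤ ‖∑ i, x i • a i‖ := by
        simpa only [hy, mul_one] using real_inner_le_norm (∑ i, x i • a i) y

theorem mul_norm_sum_smul_le_mul_norm_sum_smul {C : ℝ} (hr : 0 ≤ r) (hrC : r ≤ C)
    (ha : ∀ i, ‖a i‖ ≤ C) (hx : ∀ i, 0 ≤ x i) (hy : ‖y‖ = 1) (hyB : ∀ i ∈ B, ⟪a i, y⟫ = 0)
    (hyN : ∀ i ∉ B, r ≤ ⟪a i, y⟫) :
    r * ‖∑ i ∈ B, x i • a i‖ ≤ C * ‖∑ i, x i • a i‖ := by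
  classical
  have hC : 0 ≤ C := hr.trans hrC
  have hσ : 0 ≤ ∑ i ∈ Bᶜ, x i := Finset.sum_nonneg fun i _ => hx i
  have hqy : r * ∑ i ∈ Bᶜ, x i ≤ ⟪∑ i ∈ Bᶜ, x i • a i, y⟫ :=
    mul_sum_le_inner_sum_smul (fun i _ => hx i) fun i hi => hyN i (Finset.mem_compl.mp hi)
  rw [← Finset.sum_add_sum_compl B fun i => x i • a i]
  refine mul_norm_le_mul_norm_add hr hrC hy (inner_sum_smul_eq_zero hyB)
    ((mul_nonneg hr hσ).trans hqy) ?_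
  calc r * ‖∑ i ∈ Bᶜ, x i • a i‖ ≤ r * (C * ∑ i ∈ Bᶜ, x i) := by
        gcongr
        exact norm_sum_smul_le_mul_sum (fun i _ => hx i) fun i _ => ha i
    _ = C * (r * ∑ i ∈ Bᶜ, x i) := by ring
    _ ≤ C * ⟪∑ i ∈ Bᶜ, x i • a i, y⟫ := by gcongr

end WeightedSums

/-- `ρ` is the Goffin measure of the vectors `a i`, `i ∈ s`, relative to the subspace `K`: the
maximum over unit vectors `z ∈ K` of `min_{i ∈ s} ⟪a i, z⟫`. It is `ρ_B(A)` for `s = B`, `K = L`,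
and `ρ_N(A)` for `s = N`, `K = Lᗮ`. For `s = ∅` the minimum is the junk value `sInf ∅ = 0`. -/
def IsGoffinMeasure (a : ι → E) (s : Finset ι) (K : Submodule ℝ E) (ρ : ℝ) : Prop :=
  IsGreatest {t : ℝ | ∃ z : E, z ∈ K ∧ ‖z‖ = 1 ∧ t = sInf {r : ℝ | ∃ i ∈ s, r = ⟪a i, z⟫}} ρ

theorem finite_setOf_exists_mem_eq (s : Finset ι) (f : ι → ℝ) :
    {r : ℝ | ∃ i ∈ s, r = f i}.Finite :=
  (s.finite_toSet.image f).subset fun _ ⟨i, hi, hr⟩ => ⟨i, hi, hr.symm⟩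

namespace IsGoffinMeasure

variable {a : ι → E} {s : Finset ι} {K : Submodule ℝ E} {ρ : ℝ}

theorem exists_unit_forall_le_inner (h : IsGoffinMeasure a s K ρ) :
    ∃ z ∈ K, ‖z‖ = 1 ∧ ∀ i ∈ s, ρ ≤ ⟪a i, z⟫ := by
  obtain ⟨z, hzK, hz, hρ⟩ := h.1
  exact ⟨z, hzK, hz, fun i hi =>
    hρ.trans_le (csInf_le (finite_setOf_exists_mem_eq s _).bddBelow ⟨i, hi, rfl⟩)⟩

theorem exists_inner_le (h : IsGoffinMeasure a s K ρ) (hs : s.Nonempty) {z : E} (hz : z ∈ K) :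
    ∃ i ∈ s, ⟪a i, z⟫ ≤ ρ * ‖z‖ := by
  obtain ⟨i₀, hi₀⟩ := hs
  rcases eq_or_ne z 0 with rfl | hz0
  · exact ⟨i₀, hi₀, by rw [inner_zero_right, norm_zero, mul_zero]⟩
  have hunit : sInf {r : ℝ | ∃ i ∈ s, r = ⟪a i, ‖z‖⁻¹ • z⟫} ≤ ρ :=
    h.2 ⟨‖z‖⁻¹ • z, K.smul_mem _ hz, norm_smul_inv_norm hz0, rfl⟩
  obtain ⟨i, hi, hmin⟩ := Set.Nonempty.csInf_mem
    (s := {r : ℝ | ∃ i ∈ s, r = ⟪a i, ‖z‖⁻¹ • z⟫}) ⟨_, i₀, hi₀, rfl⟩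
    (finite_setOf_exists_mem_eq s _)
  rw [hmin, real_inner_smul_right, inv_mul_le_iff₀ (norm_pos_iff.mpr hz0), mul_comm] at hunit
  exact ⟨i, hi, hunit⟩

theorem abs_le (h : IsGoffinMeasure a s K ρ) (hs : s.Nonempty) {C : ℝ}
    (hC : ∀ i ∈ s, ‖a i‖ ≤ C) : |ρ| ≤ C := by
  obtain ⟨z, hzK, hz, hle⟩ := h.exists_unit_forall_le_inner
  obtain ⟨i, hi, hge⟩ := h.exists_inner_le hs hzK
  rw [hz, mul_one] at hge
  rw [hge.antisymm' (hle i hi)]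
  exact (abs_real_inner_le_norm _ _).trans (by simpa only [hz, mul_one] using hC i hi)

theorem pos_of_forall_inner_pos (h : IsGoffinMeasure a s K ρ) (hs : s.Nonempty) {y : E}
    (hyK : y ∈ K) (hy : ∀ i ∈ s, 0 < ⟪a i, y⟫) : 0 < ρ := by
  obtain ⟨i, hi, hle⟩ := h.exists_inner_le hs hyK
  exact pos_of_mul_pos_left ((hy i hi).trans_le hle) (norm_nonneg y)

theorem pos_of_exists_inner_pos {t : Set ι}
    (h : IsGoffinMeasure a s (Submodule.span ℝ (a '' t))ᗮ ρ) (hs : s.Nonempty)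
    (hy : ∃ y, (∀ i ∈ s, 0 < ⟪a i, y⟫) ∧ ∀ i ∈ t, ⟪a i, y⟫ = 0) : 0 < ρ :=
  let ⟨_, hys, hyt⟩ := hy
  h.pos_of_forall_inner_pos hs (mem_orthogonal_span_image hyt) hys

theorem nonempty (h : IsGoffinMeasure a s (Submodule.span ℝ (a '' s)) ρ) : s.Nonempty := by
  obtain ⟨z, hz, hz1, -⟩ := h.exists_unit_forall_le_inner
  rw [Finset.nonempty_iff_ne_empty]
  rintro rfl
  rw [Finset.coe_empty, Set.image_empty, Submodule.span_empty, Submodule.mem_bot] at hz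
  simp [hz] at hz1

theorem neg_of_sum_smul_eq_zero (h : IsGoffinMeasure a s (Submodule.span ℝ (a '' s)) ρ)
    {x : ι → ℝ} (hx : ∀ i ∈ s, 0 < x i) (hsum : ∑ i ∈ s, x i • a i = 0) : ρ < 0 := by
  obtain ⟨z, hzspan, hz, hle⟩ := h.exists_unit_forall_le_inner
  by_contra! hρ
  have hterm_nonneg : ∀ i ∈ s, 0 ≤ x i * ⟪a i, z⟫ := fun i hi =>
    mul_nonneg (hx i hi).le (hρ.trans (hle i hi))
  have hterm_sum : ∑ i ∈ s, x i * ⟪a i, z⟫ = 0 := by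
    simpa only [sum_inner, real_inner_smul_left, inner_zero_left] using congrArg (⟪·, z⟫) hsum
  have horth : ∀ i ∈ s, ⟪a i, z⟫ = 0 := fun i hi =>
    (mul_eq_zero_iff_left (hx i hi).ne').mp
      ((Finset.sum_eq_zero_iff_of_nonneg hterm_nonneg).mp hterm_sum i hi)
  have hzz : ⟪z, z⟫ = 0 := mem_orthogonal_span_image horth z hzspan
  rw [real_inner_self_eq_norm_sq, hz] at hzz
  norm_num at hzz

theorem mem_convexHull_of_norm_le (h : IsGoffinMeasure a s K ρ) (hs : s.Nonempty)
    (haK : ∀ i ∈ s, a i ∈ K) [CompleteSpace K] {p : E} (hpK : p ∈ K) (hp : ‖p‖ ≤ -ρ) :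
    p ∈ convexHull ℝ (a '' s) := by
  by_contra hphull
  obtain ⟨f, c, hf, hfp⟩ := geometric_hahn_banach_closed_point (convex_convexHull ℝ (a '' s))
    ((s.finite_toSet.image a).isClosed_convexHull ℝ) hphull
  obtain ⟨z, hz⟩ : ∃ z : K, ∀ w ∈ K, ⟪w, z⟫ = f w :=
    ⟨(InnerProductSpace.toDual ℝ K).symm (f.comp K.subtypeL), fun w hw => by
      rw [real_inner_comm]
      exact InnerProductSpace.toDual_symm_apply (x := (⟨w, hw⟩ : K))⟩
  obtain ⟨i, hi, hle⟩ := h.exists_inner_le hs (K.neg_mem z.2)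
  rw [inner_neg_right, norm_neg, hz _ (haK i hi)] at hle
  have hlt : f (a i) < f p := (hf _ (subset_convexHull ℝ _ ⟨i, hi, rfl⟩)).trans hfp
  have hpz : f p ≤ -ρ * ‖(z : E)‖ := by
    rw [← hz p hpK]
    exact (real_inner_le_norm p z).trans (mul_le_mul_of_nonneg_right hp (norm_nonneg _))
  linarith

end IsGoffinMeasure

end InnerProductSpace

section RestrictedWidth

variable {m n : ℕ} {a : Fin n → EuclideanSpace ℝ (Fin m)} {x : Fin n → ℝ}

theorem comb_eq_linearCombination (a : Fin n → EuclideanSpace ℝ (Fin m)) :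
    comb a = Fintype.linearCombination ℝ a :=
  rfl

theorem comb_image_stdSimplex (a : Fin n → EuclideanSpace ℝ (Fin m)) :
    comb a '' stdSimplex ℝ (Fin n) = convexHull ℝ (Set.range a) := by
  rw [comb_eq_linearCombination, ← convexHull_basis_eq_stdSimplex, LinearMap.image_convexHull,
    ← Set.range_comp]
  congr 2
  ext1 i
  simp [Fintype.linearCombination_apply]

theorem norm_comb_le_of_mem_stdSimplex {u : Fin n → ℝ} (hu : u ∈ stdSimplex ℝ (Fin n)) :
    ‖comb a u‖ ≤ ⨆ i, ‖a i‖ := by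
  simpa only [hu.2, mul_one, comb] using
    norm_sum_smul_le_mul_sum (s := Finset.univ) (fun i _ => hu.1 i) fun i _ => norm_le_iSup_norm a i

theorem mul_norm_comb_le_phiAt (hw : comb a x ≠ 0) {s : ℝ} (hs : 0 < s) {u v : Fin n → ℝ}
    (hu : u ∈ stdSimplex ℝ (Fin n)) (hv : v ∈ stdSimplex ℝ (Fin n))
    (hux : ∀ i, 0 < u i → 0 < x i) (huv : comb a u - comb a v = s • comb a x) :
    s * ‖comb a x‖ ≤ phiAt a x := by
  have hw0 : 0 < ‖comb a x‖ := norm_pos_iff.mpr hw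
  refine le_csSup ⟨(⨆ i, ‖a i‖) + ⨆ i, ‖a i‖, ?_⟩
    ⟨by positivity, u, hu, v, hv, hux, by rw [huv, mul_div_cancel_right₀ _ hw0.ne']⟩
  rintro t ⟨ht, u', hu', v', hv', -, h⟩
  calc t = ‖(t / ‖comb a x‖) • comb a x‖ := by
        rw [norm_smul, Real.norm_of_nonneg (by positivity), div_mul_cancel₀ _ hw0.ne']
    _ = ‖comb a u' - comb a v'‖ := by rw [h]
    _ ≤ ‖comb a u'‖ + ‖comb a v'‖ := norm_sub_le _ _
    _ ≤ _ := add_le_add (norm_comb_le_of_mem_stdSimplex hu') (norm_comb_le_of_mem_stdSimplex hv')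

theorem mul_norm_comb_le_phiAt_of_mem_convexHull (hx : ∀ i, 0 ≤ x i) (hw : comb a x ≠ 0) {s : ℝ}
    (hs : 0 < s) {B : Finset (Fin n)} (hmass : s * ∑ i ∈ Bᶜ, x i ≤ 1)
    (hhull : -(s • ∑ i ∈ B, x i • a i) ∈ convexHull ℝ (Set.range a)) :
    s * ‖comb a x‖ ≤ phiAt a x := by
  obtain ⟨v, hv, hav⟩ := (comb_image_stdSimplex a).symm.subset hhull
  have hX : 0 < ∑ i, x i := by
    refine (Finset.sum_nonneg fun i _ => hx i).lt_of_ne' fun h0 => hw ?_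
    rw [Fintype.sum_eq_zero_iff_of_nonneg hx] at h0
    rw [h0, comb_eq_linearCombination, map_zero]
  -- `u = s x_N + δ x`, with `δ` chosen to make the total mass one
  set δ := (1 - s * ∑ i ∈ Bᶜ, x i) / ∑ i, x i with hδ
  have hδ0 : 0 ≤ δ := div_nonneg (sub_nonneg.mpr hmass) hX.le
  set xN : Fin n → ℝ := fun i => if i ∈ Bᶜ then x i else 0 with hxN
  have hxN0 : ∀ i, 0 ≤ xN i := fun i => ite_nonneg (hx i) le_rfl
  have hu : s • xN + δ • x ∈ stdSimplex ℝ (Fin n) := by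
    refine ⟨fun i => add_nonneg (mul_nonneg hs.le (hxN0 i)) (mul_nonneg hδ0 (hx i)), ?_⟩
    simp only [Pi.add_apply, Pi.smul_apply, smul_eq_mul, Finset.sum_add_distrib, ← Finset.mul_sum,
      hxN, Finset.sum_ite_mem, Finset.univ_inter]
    rw [hδ, div_mul_cancel₀ _ hX.ne', add_sub_cancel]
  have hux : ∀ i, 0 < (s • xN + δ • x) i → 0 < x i := fun i hi =>
    (hx i).lt_of_ne' fun h0 => by simp [hxN, h0] at hi
  have hcomb : comb a xN + ∑ i ∈ B, x i • a i = comb a x := by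
    simp only [comb, hxN, ite_smul, zero_smul, Finset.sum_ite_mem, Finset.univ_inter]
    exact Finset.sum_compl_add_sum B _
  have huv : comb a (s • xN + δ • x) - comb a v = (s + δ) • comb a x := by
    rw [hav, add_smul, ← hcomb, comb_eq_linearCombination, map_add, map_smul, map_smul,
      ← comb_eq_linearCombination, ← hcomb]
    module
  calc s * ‖comb a x‖ ≤ (s + δ) * ‖comb a x‖ := by gcongr; linarith
    _ ≤ phiAt a x := mul_norm_comb_le_phiAt hw (by positivity) hu hv hux huv

theorem mul_div_le_phiAt {B : Finset (Fin n)} {y : EuclideanSpace ℝ (Fin m)} {β r C : ℝ}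
    (hβ : 0 < β) (hβC : β ≤ C) (hr : 0 < r) (hrC : r ≤ C) (ha : ∀ i, ‖a i‖ ≤ C)
    (hball : ∀ p ∈ Submodule.span ℝ (a '' B), ‖p‖ ≤ β → p ∈ convexHull ℝ (Set.range a))
    (hy : ‖y‖ = 1) (hyB : ∀ i ∈ B, ⟪a i, y⟫ = 0) (hyN : ∀ i ∉ B, r ≤ ⟪a i, y⟫)
    (hx : ∀ i, 0 ≤ x i) (hw : comb a x ≠ 0) :
    β * r / C ≤ phiAt a x := by
  have hC : 0 < C := hβ.trans_le hβC
  have hw0 : 0 < ‖comb a x‖ := norm_pos_iff.mpr hw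
  have hσw : r * ∑ i ∈ Bᶜ, x i ≤ ‖comb a x‖ := mul_sum_compl_le_norm_sum_smul hx hy hyB hyN
  have hpw : r * ‖∑ i ∈ B, x i • a i‖ ≤ C * ‖comb a x‖ :=
    mul_norm_sum_smul_le_mul_norm_sum_smul hr.le hrC ha hx hy hyB hyN
  have hpL : ∑ i ∈ B, x i • a i ∈ Submodule.span ℝ (a '' B) := Submodule.sum_mem _ fun i hi =>
    Submodule.smul_mem _ _ (Submodule.subset_span (Set.mem_image_of_mem a hi))
  have hmass : β * r / C / ‖comb a x‖ * ∑ i ∈ Bᶜ, x i ≤ 1 := by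
    rw [div_div, div_mul_eq_mul_div, div_le_one (by positivity), mul_assoc]
    exact mul_le_mul hβC hσw (mul_nonneg hr.le (Finset.sum_nonneg fun i _ => hx i)) hC.le
  have hnorm : ‖-((β * r / C / ‖comb a x‖) • ∑ i ∈ B, x i • a i)‖ ≤ β := by
    rw [norm_neg, norm_smul, Real.norm_of_nonneg (by positivity), div_div, div_mul_eq_mul_div,
      div_le_iff₀ (by positivity), mul_assoc]
    gcongr
  rw [← div_mul_cancel₀ (β * r / C) hw0.ne']
  exact mul_norm_comb_le_phiAt_of_mem_convexHull hx hw (by positivity) hmass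
    (hball _ (neg_mem (Submodule.smul_mem _ _ hpL)) hnorm)

theorem le_phi (ha : ∃ i, a i ≠ 0) {t : ℝ}
    (h : ∀ x : Fin n → ℝ, (∀ i, 0 ≤ x i) → comb a x ≠ 0 → t ≤ phiAt a x) : t ≤ phi a := by
  obtain ⟨i, hi⟩ := ha
  have hsingle : (0 : Fin n → ℝ) ≤ Pi.single i 1 := Pi.single_nonneg.mpr zero_le_one
  refine le_csInf ⟨_, Pi.single i 1, hsingle, ?_, rfl⟩ ?_
  · rwa [comb_eq_linearCombination, Fintype.linearCombination_apply_single, one_smul]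
  · rintro _ ⟨x, hx, hw, rfl⟩
    exact h x hx hw

end RestrictedWidth

theorem div_sqrt_sq_add_sq_le_div {t c : ℝ} (ht : 0 ≤ t) (hc : 0 < c) (r : ℝ) :
    t / √(c ^ 2 + r ^ 2) ≤ t / c :=
  div_le_div_of_nonneg_left ht hc (Real.le_sqrt_of_sq_le (le_add_of_nonneg_right (sq_nonneg r)))

theorem stmt18_general {m n : ℕ} {a : Fin n → EuclideanSpace ℝ (Fin m)} {B N : Finset (Fin n)}
    (hBN : B ∪ N = Finset.univ)
    (hB : ∃ xB : Fin n → ℝ, (∀ i ∈ B, 0 < xB i) ∧ ∑ i ∈ B, xB i • a i = 0)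
    (hN : ∃ y : EuclideanSpace ℝ (Fin m),
      (∀ i ∈ N, 0 < ⟪a i, y⟫) ∧ ∀ i ∈ B, ⟪a i, y⟫ = 0)
    (hNne : N.Nonempty) {ρB ρN : ℝ}
    (hρB : IsGoffinMeasure a B (Submodule.span ℝ (a '' B)) ρB)
    (hρN : IsGoffinMeasure a N (Submodule.span ℝ (a '' B))ᗮ ρN) :
    |ρB| * ρN / (⨆ i, ‖a i‖) ≤ phi a := by
  obtain ⟨xB, hxB, hsum⟩ := hB
  have hρB_neg : ρB < 0 := hρB.neg_of_sum_smul_eq_zero hxB hsum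
  have hρN_pos : 0 < ρN := hρN.pos_of_exists_inner_pos hNne hN
  have hρB_le : |ρB| ≤ ⨆ i, ‖a i‖ := hρB.abs_le hρB.nonempty fun i _ => norm_le_iSup_norm a i
  have hρN_le : |ρN| ≤ ⨆ i, ‖a i‖ := hρN.abs_le hNne fun i _ => norm_le_iSup_norm a i
  have hball : ∀ p ∈ Submodule.span ℝ (a '' B), ‖p‖ ≤ |ρB| → p ∈ convexHull ℝ (Set.range a) :=
    fun p hpL hp => convexHull_mono (Set.image_subset_range a B) <|
      hρB.mem_convexHull_of_norm_le hρB.nonempty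
        (fun i hi => Submodule.subset_span (Set.mem_image_of_mem a hi)) hpL
        (hp.trans_eq (abs_of_neg hρB_neg))
  obtain ⟨y, hyL, hy, hyN⟩ := hρN.exists_unit_forall_le_inner
  have hyB : ∀ i ∈ B, ⟪a i, y⟫ = 0 := fun i hi =>
    Submodule.inner_right_of_mem_orthogonal (Submodule.subset_span (Set.mem_image_of_mem a hi)) hyL
  have hyN' : ∀ i ∉ B, ρN ≤ ⟪a i, y⟫ := fun i hi =>
    hyN i ((Finset.mem_union.mp (hBN ▸ Finset.mem_univ i)).resolve_left hi)
  obtain ⟨i, hi⟩ := hNne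
  have hai : a i ≠ 0 := fun h0 =>
    (hρN_pos.trans_le (hyN i hi)).ne' (by rw [h0, inner_zero_left])
  exact le_phi ⟨i, hai⟩ fun x hx hw => mul_div_le_phiAt (abs_pos.mpr hρB_neg.ne) hρB_le hρN_pos
    ((le_abs_self ρN).trans hρN_le) (norm_le_iSup_norm a) hball hy hyB hyN' hx hw

/-- for the canonical partition `(B, N)` of a nonzero matrix `A`, if
`N ≠ ∅` and `L := span(A_B) ≠ {0}`, then
`φ(A) ≥ |ρ_B(A)| ρ_N(A) / √(‖A‖² + ρ_N(A)²)`, where `‖A‖ = max_i ‖a i‖`,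
`ρ_B(A) = max_{z ∈ L, ‖z‖=1} min_{i ∈ B} ⟪a i, z⟫` and
`ρ_N(A) = max_{z ∈ L^⊥, ‖z‖=1} min_{i ∈ N} ⟪a i, z⟫`. -/
theorem stmt18 (m n : ℕ) (hn : 0 < n) (a : Fin n → EuclideanSpace ℝ (Fin m))
    (hA : ∃ i, a i ≠ 0) (B N : Finset (Fin n))
    (hBN : B ∪ N = Finset.univ) (hdisj : B ∩ N = ∅)
    (hB : ∃ xB : Fin n → ℝ, (∀ i ∈ B, 0 < xB i) ∧ ∑ i ∈ B, xB i • a i = 0)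
    (hN : ∃ y : EuclideanSpace ℝ (Fin m),
      (∀ i ∈ N, 0 < ⟪a i, y⟫) ∧ ∀ i ∈ B, ⟪a i, y⟫ = 0)
    (hNne : N.Nonempty)
    (hL : Submodule.span ℝ (a '' (B : Set (Fin n))) ≠ ⊥) (ρB ρN : ℝ)
    (hρB : IsGreatest
      {t : ℝ | ∃ z : EuclideanSpace ℝ (Fin m),
        z ∈ Submodule.span ℝ (a '' (B : Set (Fin n))) ∧ ‖z‖ = 1 ∧
        t = sInf {s : ℝ | ∃ i ∈ B, s = ⟪a i, z⟫}} ρB)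
    (hρN : IsGreatest
      {t : ℝ | ∃ z : EuclideanSpace ℝ (Fin m),
        z ∈ (Submodule.span ℝ (a '' (B : Set (Fin n))))ᗮ ∧ ‖z‖ = 1 ∧
        t = sInf {s : ℝ | ∃ i ∈ N, s = ⟪a i, z⟫}} ρN) :
    |ρB| * ρN / Real.sqrt ((⨆ i : Fin n, ‖a i‖) ^ 2 + ρN ^ 2) ≤ phi a := by
  have hρN_pos : 0 < ρN := IsGoffinMeasure.pos_of_exists_inner_pos hρN hNne hN
  exact (div_sqrt_sq_add_sq_le_div (by positivity) (iSup_norm_pos hA) ρN).trans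
    (stmt18_general hBN hB hN hNne hρB hρN)
end

section
/- Let A = [a_1, ..., a_n] ∈ ℝ^{m×n} be a nonzero matrix with 0 ∈ conv{a_1,...,a_n}. Then w(A) ≥ φ(A) > 0; in particular both the relative width w(A) and the restricted width φ(A) are strictly positive. -/
open scoped RealInnerProductSpace BigOperators

/-- The relative width
`w(A) = min_{x ≥ 0, Ax ≠ 0} max {⟪Ax, a ℓ - a j⟫ / ‖Ax‖ : ℓ ∈ S(x), j ∈ {1,…,n}}`. -/
noncomputable def relWidth {m n : ℕ} (a : Fin n → EuclideanSpace ℝ (Fin m)) : ℝ :=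
  sInf {t : ℝ | ∃ x : Fin n → ℝ, (∀ i, 0 ≤ x i) ∧ comb a x ≠ 0 ∧
    t = sSup {s : ℝ | ∃ ℓ j : Fin n, 0 < x ℓ ∧
      s = ⟪comb a x, a ℓ - a j⟫ / ‖comb a x‖}}

/-!
Put `y = A x`. For `φ(A) ≤ w(A)`, pair `A u - A v = (λ / ‖y‖) y` with `y / ‖y‖`: since `⟪y, A u⟫`
and `⟪y, A v⟫` are weighted averages of the numbers `⟪y, a i⟫`, some column in the support of `u`
lies above the first and some column lies below the second, so `λ` is at most the corresponding
quotient `⟪y, a ℓ - a j⟫ / ‖y‖`.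

For `φ(A) > 0`, conic Carathéodory rewrites `y` as `A z` with `z ≥ 0` supported inside `S(x)` and on
linearly independent columns. On each of the finitely many linearly independent subfamilies `A` is
bounded below, so `‖z‖₁ ≤ C ‖y‖` with `C` depending on `A` only. Taking `u = z / ‖z‖₁` and `v` with
`A v = 0` gives `φ(A, x) ≥ ‖y‖ / ‖z‖₁ ≥ 1 / C`.
-/

section OrderedField

variable {R M ι : Type*} [Field R] [LinearOrder R] [IsStrictOrderedRing R] [AddCommGroup M]
  [Module R M]

theorem exists_nonneg_support_ssubset_linearCombination_eq {a : ι → M} {x g : ι →₀ R}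
    (hx : 0 ≤ x) (hgx : g.support ⊆ x.support) (hg : Finsupp.linearCombination R a g = 0)
    (hpos : ∃ i, 0 < g i) :
    ∃ y : ι →₀ R, 0 ≤ y ∧ y.support ⊂ x.support ∧
      Finsupp.linearCombination R a y = Finsupp.linearCombination R a x := by
  have hsupp {i : ι} (hi : 0 < g i) : i ∈ g.support := Finsupp.mem_support_iff.2 hi.ne'
  obtain ⟨p, hp, hmin⟩ := Finset.exists_min_image {i ∈ g.support | 0 < g i} (fun i => x i / g i)
    (hpos.imp fun i hi => Finset.mem_filter.2 ⟨hsupp hi, hi⟩)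
  have hgp : 0 < g p := (Finset.mem_filter.1 hp).2
  set t := x p / g p with ht
  have ht0 : 0 ≤ t := div_nonneg (hx p) hgp.le
  have hyp : (x - t • g) p = 0 := by simp [ht, hgp.ne']
  refine ⟨x - t • g, fun i => ?_, ?_, by simp [hg]⟩
  · suffices t * g i ≤ x i by simpa using this
    rcases le_or_gt (g i) 0 with hi | hi
    · exact (mul_nonpos_of_nonneg_of_nonpos ht0 hi).trans (hx i)
    · exact (le_div_iff₀ hi).1 (hmin i (Finset.mem_filter.2 ⟨hsupp hi, hi⟩))
  · classical
    refine (Finset.ssubset_iff_of_subset ?_).2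
      ⟨p, hgx (hsupp hgp), fun h => Finsupp.mem_support_iff.1 h hyp⟩
    exact Finsupp.support_sub.trans
      (Finset.union_subset subset_rfl (Finsupp.support_smul.trans hgx))

/-- Conic Carathéodory theorem: moving a representation of minimal support along a linear relation
among its vectors would make another coefficient vanish. -/
theorem exists_nonneg_linearIndepOn_support_linearCombination_eq (a : ι → M) {x : ι →₀ R}
    (hx : 0 ≤ x) :
    ∃ z : ι →₀ R, 0 ≤ z ∧ z.support ⊆ x.support ∧ LinearIndepOn R a (z.support : Set ι) ∧
      Finsupp.linearCombination R a z = Finsupp.linearCombination R a x := by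
  obtain ⟨z, ⟨hz, hzx, hza⟩, hmin⟩ := exists_minimalFor_of_wellFoundedLT
    (fun z : ι →₀ R => 0 ≤ z ∧ z.support ⊆ x.support ∧
      Finsupp.linearCombination R a z = Finsupp.linearCombination R a x)
    Finsupp.support ⟨x, hx, subset_rfl, rfl⟩
  refine ⟨z, hz, hzx, by_contra fun hdep => ?_, hza⟩
  obtain ⟨g, hgz, hg, hpos⟩ : ∃ g : ι →₀ R, g.support ⊆ z.support ∧
      Finsupp.linearCombination R a g = 0 ∧ ∃ i, 0 < g i := by
    obtain ⟨g, hgz, hg, hg0⟩ := linearDepOn_iff'.1 hdep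
    have hgz : g.support ⊆ z.support := Finset.coe_subset.1 hgz
    obtain ⟨i, hi⟩ := DFunLike.ne_iff.1 hg0
    rcases lt_or_gt_of_ne hi with hi | hi
    · exact ⟨-g, by rwa [Finsupp.support_neg], by simp [hg], i, by simpa using hi⟩
    · exact ⟨g, hgz, hg, i, hi⟩
  obtain ⟨y, hy, hyz, hya⟩ := exists_nonneg_support_ssubset_linearCombination_eq hz hgz hg hpos
  exact hyz.not_subset (hmin ⟨hy, hyz.subset.trans hzx, hya.trans hza⟩ hyz.subset)

variable [Fintype ι]

theorem convexHull_range_eq_image_stdSimplex (a : ι → M) :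
    convexHull R (Set.range a) = Fintype.linearCombination R a '' stdSimplex R ι := by
  classical
  rw [← convexHull_rangle_single_eq_stdSimplex, LinearMap.image_convexHull, ← Set.range_comp]
  congr 2
  ext i
  simp [Fintype.linearCombination_apply_single]

theorem exists_map_linearCombination_le_of_mem_stdSimplex (a : ι → M) {u : ι → R}
    (hu : u ∈ stdSimplex R ι) (f : M →ₗ[R] R) :
    ∃ i, 0 < u i ∧ f (Fintype.linearCombination R a u) ≤ f (a i) := by
  by_contra! h
  set c := f (Fintype.linearCombination R a u) with hc
  have hle (i : ι) : u i * f (a i) ≤ u i * c := by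
    rcases (hu.1 i).eq_or_lt with hi | hi
    · simp [← hi]
    · exact mul_le_mul_of_nonneg_left (h i hi).le hi.le
  obtain ⟨p, -, hp⟩ : ∃ p ∈ Finset.univ, 0 < u p :=
    Finset.exists_lt_of_sum_lt (by simp [hu.2])
  refine lt_irrefl c ?_
  calc c = ∑ i, u i * f (a i) := by simp [hc, Fintype.linearCombination_apply]
    _ < ∑ i, u i * c := Finset.sum_lt_sum (fun i _ => hle i)
      ⟨p, Finset.mem_univ p, mul_lt_mul_of_pos_left (h p hp) hp⟩
    _ = c := by rw [← Finset.sum_mul, hu.2, one_mul]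

end OrderedField

section NormedSpace

variable {E ι : Type*} [NormedAddCommGroup E] [NormedSpace ℝ E]

theorem exists_sum_abs_le_of_linearIndependent [Fintype ι] {a : ι → E}
    (ha : LinearIndependent ℝ a) :
    ∃ C : ℝ, ∀ g : ι → ℝ, ∑ i, |g i| ≤ C * ‖∑ i, g i • a i‖ := by
  obtain ⟨K, -, hK⟩ := (Fintype.linearCombination ℝ a).exists_antilipschitzWith
    (LinearMap.ker_eq_bot.2 (linearIndependent_iff_injective_fintypeLinearCombination.1 ha))
  refine ⟨Fintype.card ι * K, fun g => ?_⟩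
  have hg : ‖g‖ ≤ K * ‖∑ i, g i • a i‖ := by
    simpa [Fintype.linearCombination_apply] using hK.le_mul_dist g 0
  calc ∑ i, |g i| ≤ Fintype.card ι * ‖g‖ := by
        simpa [nsmul_eq_mul] using Pi.sum_norm_apply_le_norm g
    _ ≤ Fintype.card ι * K * ‖∑ i, g i • a i‖ := by rw [mul_assoc]; gcongr

theorem exists_sum_abs_le_of_linearIndepOn_support [Finite ι] (a : ι → E) :
    ∃ C : ℝ, 0 < C ∧ ∀ z : ι →₀ ℝ, LinearIndepOn ℝ a (z.support : Set ι) →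
      ∑ i ∈ z.support, |z i| ≤ C * ‖Finsupp.linearCombination ℝ a z‖ := by
  have hbound (t : {t : Finset ι // LinearIndepOn ℝ a (t : Set ι)}) :
      ∃ C : ℝ, ∀ g : t.1 → ℝ, ∑ i, |g i| ≤ C * ‖∑ i, g i • a i‖ :=
    exists_sum_abs_le_of_linearIndependent t.2
  choose C hC using hbound
  obtain ⟨B, hB⟩ := (Set.finite_range C).bddAbove
  refine ⟨max B 1, by positivity, fun z hz => ?_⟩
  have hCB : C ⟨z.support, hz⟩ ≤ max B 1 := (hB ⟨_, rfl⟩).trans (le_max_left B 1)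
  calc ∑ i ∈ z.support, |z i| = ∑ i : z.support, |z i| := (Finset.sum_coe_sort _ _).symm
    _ ≤ C ⟨z.support, hz⟩ * ‖∑ i : z.support, z i • a i‖ := hC ⟨z.support, hz⟩ fun i => z i
    _ = C ⟨z.support, hz⟩ * ‖Finsupp.linearCombination ℝ a z‖ := by
      rw [Finsupp.linearCombination_apply, Finsupp.sum,
        Finset.sum_coe_sort z.support fun i => z i • a i]
    _ ≤ max B 1 * ‖Finsupp.linearCombination ℝ a z‖ := by gcongr

theorem exists_nonneg_linearCombination_eq_sum_le [Fintype ι] (a : ι → E) :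
    ∃ C : ℝ, 0 < C ∧ ∀ x : ι → ℝ, 0 ≤ x → ∃ z : ι → ℝ, 0 ≤ z ∧ (∀ i, 0 < z i → 0 < x i) ∧
      Fintype.linearCombination ℝ a z = Fintype.linearCombination ℝ a x ∧
      ∑ i, z i ≤ C * ‖Fintype.linearCombination ℝ a x‖ := by
  obtain ⟨C, hC, hbound⟩ := exists_sum_abs_le_of_linearIndepOn_support a
  refine ⟨C, hC, fun x hx => ?_⟩
  obtain ⟨z, hz, hzx, hind, hza⟩ := exists_nonneg_linearIndepOn_support_linearCombination_eq a
    (x := (Finsupp.linearEquivFunOnFinite ℝ ℝ ι).symm x) hx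
  rw [Finsupp.linearCombination_eq_fintype_linearCombination_apply] at hza
  refine ⟨z, hz, fun i hi => (hx i).lt_of_ne' ?_, ?_, ?_⟩
  · simpa using hzx (Finsupp.mem_support_iff.2 hi.ne')
  · rw [← hza, ← Finsupp.linearCombination_eq_fintype_linearCombination_apply]
    rw [Finsupp.linearEquivFunOnFinite_symm_coe]
  · calc ∑ i, z i = ∑ i ∈ z.support, z i :=
          (Finset.sum_subset z.support.subset_univ
            fun i _ hi => Finsupp.notMem_support_iff.1 hi).symm
      _ ≤ ∑ i ∈ z.support, |z i| := Finset.sum_le_sum fun i _ => le_abs_self (z i)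
      _ ≤ C * ‖Fintype.linearCombination ℝ a x‖ := hza ▸ hbound z hind

end NormedSpace

section RestrictedWidth

variable {E ι : Type*} [NormedAddCommGroup E] [NormedSpace ℝ E] [Fintype ι]

/-- The numbers `λ > 0` competing in the supremum `φ(A, x)`, for a finite family `a` of vectors of a
normed space in place of the columns of `A`. -/
def admissibleScales (a : ι → E) (x : ι → ℝ) : Set ℝ :=
  {r | 0 < r ∧ ∃ u ∈ stdSimplex ℝ ι, ∃ v ∈ stdSimplex ℝ ι, (∀ i, 0 < u i → 0 < x i) ∧
    Fintype.linearCombination ℝ a u - Fintype.linearCombination ℝ a v =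
      (r / ‖Fintype.linearCombination ℝ a x‖) • Fintype.linearCombination ℝ a x}

/-- The restricted width `φ(A)`, for a finite family of vectors of a normed space in place of the
columns of `A`. -/
noncomputable def restrictedWidth (a : ι → E) : ℝ :=
  sInf {t | ∃ x : ι → ℝ, (∀ i, 0 ≤ x i) ∧ Fintype.linearCombination ℝ a x ≠ 0 ∧
    t = sSup (admissibleScales a x)}

theorem exists_nonneg_linearCombination_ne_zero {a : ι → E} (ha : ∃ i, a i ≠ 0) :
    ∃ x : ι → ℝ, (∀ i, 0 ≤ x i) ∧ Fintype.linearCombination ℝ a x ≠ 0 := by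
  classical
  obtain ⟨p, hp⟩ := ha
  have hsingle : (0 : ι → ℝ) ≤ Pi.single p 1 := Pi.single_nonneg.2 zero_le_one
  exact ⟨Pi.single p 1, hsingle, by rwa [Fintype.linearCombination_apply_single, one_smul]⟩

theorem restrictedWidth_le_sSup_admissibleScales {a : ι → E} {x : ι → ℝ} (hx : ∀ i, 0 ≤ x i)
    (hx0 : Fintype.linearCombination ℝ a x ≠ 0) :
    restrictedWidth a ≤ sSup (admissibleScales a x) := by
  refine csInf_le ⟨0, ?_⟩ ⟨x, hx, hx0, rfl⟩
  rintro t ⟨w, -, -, rfl⟩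
  exact Real.sSup_nonneg fun _ hr => hr.1.le

theorem bddAbove_admissibleScales {a : ι → E} {x : ι → ℝ}
    (hx0 : Fintype.linearCombination ℝ a x ≠ 0) : BddAbove (admissibleScales a x) := by
  obtain ⟨B, hB⟩ := (isCompact_stdSimplex ℝ ι).exists_bound_of_continuousOn
    (Fintype.linearCombination ℝ a).continuous_of_finiteDimensional.continuousOn
  refine ⟨B + B, ?_⟩
  rintro r ⟨hr, u, hu, v, hv, -, huv⟩
  calc r = ‖(r / ‖Fintype.linearCombination ℝ a x‖) • Fintype.linearCombination ℝ a x‖ := by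
        rw [norm_smul, Real.norm_of_nonneg (by positivity),
          div_mul_cancel₀ _ (norm_ne_zero_iff.2 hx0)]
    _ = ‖Fintype.linearCombination ℝ a u - Fintype.linearCombination ℝ a v‖ := by rw [huv]
    _ ≤ B + B := norm_sub_le_of_le (hB u hu) (hB v hv)

theorem norm_div_sum_mem_admissibleScales {a : ι → E} {x z v : ι → ℝ}
    (hx0 : Fintype.linearCombination ℝ a x ≠ 0) (hz : 0 ≤ z) (hz0 : 0 < ∑ i, z i)
    (hzx : ∀ i, 0 < z i → 0 < x i)
    (hza : Fintype.linearCombination ℝ a z = Fintype.linearCombination ℝ a x)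
    (hv : v ∈ stdSimplex ℝ ι) (hva : Fintype.linearCombination ℝ a v = 0) :
    ‖Fintype.linearCombination ℝ a x‖ / ∑ i, z i ∈ admissibleScales a x := by
  refine ⟨by positivity, (∑ i, z i)⁻¹ • z, ⟨fun i => ?_, ?_⟩, v, hv, fun i hi => hzx i ?_, ?_⟩
  · exact mul_nonneg (inv_nonneg.2 hz0.le) (hz i)
  · simp only [Pi.smul_apply, smul_eq_mul, ← Finset.mul_sum, inv_mul_cancel₀ hz0.ne']
  · exact pos_of_mul_pos_right hi (inv_nonneg.2 hz0.le)
  · rw [map_smul, hza, hva, sub_zero, div_right_comm, div_self (norm_ne_zero_iff.2 hx0), one_div]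

theorem exists_pos_forall_exists_mem_admissibleScales_ge {a : ι → E}
    (h0 : (0 : E) ∈ convexHull ℝ (Set.range a)) :
    ∃ c : ℝ, 0 < c ∧ ∀ x : ι → ℝ, (∀ i, 0 ≤ x i) → Fintype.linearCombination ℝ a x ≠ 0 →
      ∃ r ∈ admissibleScales a x, c ≤ r := by
  rw [convexHull_range_eq_image_stdSimplex] at h0
  obtain ⟨v, hv, hva⟩ := h0
  obtain ⟨C, hC, hbound⟩ := exists_nonneg_linearCombination_eq_sum_le a
  refine ⟨1 / C, by positivity, fun x hx hx0 => ?_⟩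
  obtain ⟨z, hz, hzx, hza, hsum⟩ := hbound x hx
  have hz_ne : z ≠ 0 := by
    rintro rfl
    exact hx0 (hza ▸ map_zero _)
  have hz_sum : 0 < ∑ i, z i := Fintype.sum_pos (hz.lt_of_ne' hz_ne)
  refine ⟨_, norm_div_sum_mem_admissibleScales hx0 hz hz_sum hzx hza hv hva, ?_⟩
  rwa [div_le_div_iff₀ hC hz_sum, one_mul, mul_comm]

theorem restrictedWidth_pos {a : ι → E} (ha : ∃ i, a i ≠ 0)
    (h0 : (0 : E) ∈ convexHull ℝ (Set.range a)) : 0 < restrictedWidth a := by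
  obtain ⟨c, hc, hscale⟩ := exists_pos_forall_exists_mem_admissibleScales_ge h0
  obtain ⟨x₀, hx₀⟩ := exists_nonneg_linearCombination_ne_zero ha
  refine hc.trans_le (le_csInf ⟨_, x₀, hx₀.1, hx₀.2, rfl⟩ ?_)
  rintro t ⟨x, hx, hx0, rfl⟩
  obtain ⟨r, hr, hcr⟩ := hscale x hx hx0
  exact hcr.trans (le_csSup (bddAbove_admissibleScales hx0) hr)

end RestrictedWidth

section RelativeWidth

variable {E ι : Type*} [NormedAddCommGroup E] [InnerProductSpace ℝ E] [Fintype ι]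

/-- The quotients `⟪A x, a ℓ - a j⟫ / ‖A x‖` with `ℓ ∈ S(x)` whose maximum enters `w(A)`, for a
finite family `a` of vectors of an inner product space in place of the columns of `A`. -/
def supportSpreads (a : ι → E) (x : ι → ℝ) : Set ℝ :=
  {s | ∃ ℓ j : ι, 0 < x ℓ ∧
    s = ⟪Fintype.linearCombination ℝ a x, a ℓ - a j⟫ / ‖Fintype.linearCombination ℝ a x‖}

/-- The relative width `w(A)`, for a finite family of vectors of an inner product space in place of
the columns of `A`. -/
noncomputable def relativeWidth (a : ι → E) : ℝ :=
  sInf {t | ∃ x : ι → ℝ, (∀ i, 0 ≤ x i) ∧ Fintype.linearCombination ℝ a x ≠ 0 ∧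
    t = sSup (supportSpreads a x)}

theorem finite_supportSpreads (a : ι → E) (x : ι → ℝ) : (supportSpreads a x).Finite := by
  refine (Set.finite_range fun p : ι × ι => ⟪Fintype.linearCombination ℝ a x, a p.1 - a p.2⟫ /
    ‖Fintype.linearCombination ℝ a x‖).subset ?_
  rintro s ⟨ℓ, j, -, rfl⟩
  exact ⟨(ℓ, j), rfl⟩

theorem sSup_supportSpreads_nonneg (a : ι → E) (x : ι → ℝ) : 0 ≤ sSup (supportSpreads a x) := by
  rcases (supportSpreads a x).eq_empty_or_nonempty with h | ⟨_, ℓ, j, hℓ, rfl⟩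
  · rw [h, Real.sSup_empty]
  · exact le_csSup (finite_supportSpreads a x).bddAbove ⟨ℓ, ℓ, hℓ, by simp⟩

theorem exists_inner_sub_linearCombination_le (a : ι → E) {u v : ι → ℝ}
    (hu : u ∈ stdSimplex ℝ ι) (hv : v ∈ stdSimplex ℝ ι) (y : E) :
    ∃ ℓ j, 0 < u ℓ ∧ ⟪y, Fintype.linearCombination ℝ a u - Fintype.linearCombination ℝ a v⟫ ≤
      ⟪y, a ℓ - a j⟫ := by
  obtain ⟨ℓ, hℓ, hu_le⟩ := exists_map_linearCombination_le_of_mem_stdSimplex a hu (innerₗ E y)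
  obtain ⟨j, -, hv_le⟩ := exists_map_linearCombination_le_of_mem_stdSimplex a hv (-innerₗ E y)
  refine ⟨ℓ, j, hℓ, ?_⟩
  rw [inner_sub_right, inner_sub_right]
  exact sub_le_sub hu_le (neg_le_neg_iff.1 hv_le)

theorem exists_mem_supportSpreads_ge {a : ι → E} {x : ι → ℝ} {r : ℝ}
    (hx0 : Fintype.linearCombination ℝ a x ≠ 0) (hr : r ∈ admissibleScales a x) :
    ∃ s ∈ supportSpreads a x, r ≤ s := by
  obtain ⟨-, u, hu, v, hv, hux, huv⟩ := hr
  set y := Fintype.linearCombination ℝ a x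
  have hy : 0 < ‖y‖ := norm_pos_iff.2 hx0
  obtain ⟨ℓ, j, hℓ, hle⟩ := exists_inner_sub_linearCombination_le a hu hv y
  refine ⟨⟪y, a ℓ - a j⟫ / ‖y‖, ⟨ℓ, j, hux ℓ hℓ, rfl⟩, (le_div_iff₀ hy).2 ?_⟩
  calc r * ‖y‖ = ⟪y, (r / ‖y‖) • y⟫ := by
        rw [inner_smul_right, real_inner_self_eq_norm_mul_norm]
        field_simp
    _ ≤ ⟪y, a ℓ - a j⟫ := huv ▸ hle

theorem sSup_admissibleScales_le_sSup_supportSpreads {a : ι → E} {x : ι → ℝ}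
    (hx0 : Fintype.linearCombination ℝ a x ≠ 0) :
    sSup (admissibleScales a x) ≤ sSup (supportSpreads a x) := by
  refine Real.sSup_le (fun r hr => ?_) (sSup_supportSpreads_nonneg a x)
  obtain ⟨s, hs, hrs⟩ := exists_mem_supportSpreads_ge hx0 hr
  exact hrs.trans (le_csSup (finite_supportSpreads a x).bddAbove hs)

theorem restrictedWidth_le_relativeWidth {a : ι → E} (ha : ∃ i, a i ≠ 0) :
    restrictedWidth a ≤ relativeWidth a := by
  obtain ⟨x₀, hx₀⟩ := exists_nonneg_linearCombination_ne_zero ha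
  refine le_csInf ⟨_, x₀, hx₀.1, hx₀.2, rfl⟩ ?_
  rintro t ⟨x, hx, hx0, rfl⟩
  calc restrictedWidth a ≤ sSup (admissibleScales a x) :=
        restrictedWidth_le_sSup_admissibleScales hx hx0
    _ ≤ sSup (supportSpreads a x) := sSup_admissibleScales_le_sSup_supportSpreads hx0

theorem stmt19_general {a : ι → E} (ha : ∃ i, a i ≠ 0)
    (h0 : (0 : E) ∈ convexHull ℝ (Set.range a)) :
    restrictedWidth a ≤ relativeWidth a ∧ 0 < restrictedWidth a :=
  ⟨restrictedWidth_le_relativeWidth ha, restrictedWidth_pos ha h0⟩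

end RelativeWidth

/-- for a nonzero matrix `A` with `0 ∈ conv(A)`, `w(A) ≥ φ(A) > 0`. -/
theorem stmt19 (m n : ℕ) (a : Fin n → EuclideanSpace ℝ (Fin m)) (hA : ∃ i, a i ≠ 0)
    (h0 : (0 : EuclideanSpace ℝ (Fin m)) ∈ convexHull ℝ (Set.range a)) :
    phi a ≤ relWidth a ∧ 0 < phi a :=
  stmt19_general hA h0
end
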